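/- Let D be a probability measure on ℝ^d, let c : ℝ^d → {−1,+1} be measurable, let μ > 0, and let g, g' : ℝ^d → {−1,+1} be measurable with P{g(x)=1} = P{g'(x)=1} = μ. Then 2μ·(d_D(c,g) − d_D(c,g')) = P{c(x)=g'(x)} − P{c(x)=g(x)}; consequently μ·|d_D(c,g)| = | μ·d_D(c,g') + (P{c(x)=g'(x)} − P{c(x)=g(x)})/2 |. -/

import Mathlib

open MeasureTheory

/-- Statistical parity deviation `d_D(c,g) = P{c=1} − P{c=1 | g=1}`. -/
noncomputable def dev {d : ℕ} (D : Measure (EuclideanSpace ℝ (Fin d)))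
    (c g : EuclideanSpace ℝ (Fin d) → ℝ) : ℝ :=
  (D {x | c x = 1}).toReal -
    (D {x | c x = 1 ∧ g x = 1}).toReal / (D {x | g x = 1}).toReal

section ParityDeviation

open scoped symmDiff

theorem setOf_eq_eq_compl_symmDiff {Ω α : Type*} {c g : Ω → α} {a b : α}
    (hc : ∀ x, c x = a ∨ c x = b) (hg : ∀ x, g x = a ∨ g x = b) :
    {x | c x = g x} = ({x | c x = a} ∆ {x | g x = a})ᶜ := by
  ext x
  simp only [Set.mem_ofPred_eq, Set.mem_compl_iff, Set.mem_symmDiff]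
  grind

variable {Ω : Type*} [MeasurableSpace Ω]

/-- Statistical-parity deviation `P(A) − P(A | B)` of the acceptance event `A` on the subgroup `B`,
on an arbitrary measurable space. The conditional probability is written as a quotient, hence is
`0` when `P(B) = 0`; for `P` of total mass other than `1`, the term `P(A)` is not rescaled. -/
noncomputable def parityDeviation (P : Measure Ω) (A B : Set Ω) : ℝ :=
  P.real A - P.real (A ∩ B) / P.real B

variable {P : Measure Ω} {A B : Set Ω}

theorem measureReal_symmDiff_add_two_mul_inter (hA : MeasurableSet A) (hB : MeasurableSet B)
    (hPA : P A ≠ ⊤ := by finiteness) (hPB : P B ≠ ⊤ := by finiteness) :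
    P.real (A ∆ B) + 2 * P.real (A ∩ B) = P.real A + P.real B := by
  have hAB : P.real (A ∩ B) + P.real (A \ B) = P.real A := measureReal_inter_add_sdiff hB
  have hBA : P.real (A ∩ B) + P.real (B \ A) = P.real B := by
    rw [Set.inter_comm]
    exact measureReal_inter_add_sdiff hA
  rw [measureReal_symmDiff_eq hA hB]
  linarith

variable [IsFiniteMeasure P]

/-- Among subgroups `B` of a fixed mass the right-hand side is constant, so agreement with `B` is an
affine function of the deviation on `B`. -/
theorem two_mul_measureReal_mul_parityDeviation_add_compl_symmDiff
    (hA : MeasurableSet A) (hB : MeasurableSet B) (hPB : P.real B ≠ 0) :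
    2 * P.real B * parityDeviation P A B + P.real (A ∆ B)ᶜ =
      P.real Set.univ + 2 * P.real B * P.real A - P.real A - P.real B := by
  have hdev : P.real B * parityDeviation P A B = P.real B * P.real A - P.real (A ∩ B) := by
    rw [parityDeviation, mul_sub, mul_div_cancel₀ _ hPB]
  have hsymm := measureReal_symmDiff_add_two_mul_inter (P := P) hA hB
  rw [measureReal_compl (hA.symmDiff hB)]
  linarith

theorem stmt_6_general {α : Type*} [MeasurableSpace α] [MeasurableSingletonClass α] {a b : α}
    {c g g' : Ω → α} (hc : Measurable c) (hg : Measurable g) (hg' : Measurable g')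
    (hcval : ∀ x, c x = a ∨ c x = b) (hgval : ∀ x, g x = a ∨ g x = b)
    (hg'val : ∀ x, g' x = a ∨ g' x = b) {μ : ℝ} (hμ : 0 < μ)
    (hmass : P.real {x | g x = a} = μ) (hmass' : P.real {x | g' x = a} = μ) :
    2 * μ * (parityDeviation P {x | c x = a} {x | g x = a} -
        parityDeviation P {x | c x = a} {x | g' x = a}) =
      P.real {x | c x = g' x} - P.real {x | c x = g x} ∧
    μ * |parityDeviation P {x | c x = a} {x | g x = a}| =
      |μ * parityDeviation P {x | c x = a} {x | g' x = a} +
        (P.real {x | c x = g' x} - P.real {x | c x = g x}) / 2| := by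
  have measurableSet_label {f : Ω → α} (hf : Measurable f) : MeasurableSet {x | f x = a} :=
    hf (measurableSet_singleton a)
  have affine {f : Ω → α} (hf : Measurable f) (hfval : ∀ x, f x = a ∨ f x = b)
      (hfmass : P.real {x | f x = a} = μ) :
      2 * μ * parityDeviation P {x | c x = a} {x | f x = a} + P.real {x | c x = f x} =
        P.real Set.univ + 2 * μ * P.real {x | c x = a} - P.real {x | c x = a} - μ := by
    rw [setOf_eq_eq_compl_symmDiff hcval hfval, ← hfmass]
    exact two_mul_measureReal_mul_parityDeviation_add_compl_symmDiff (measurableSet_label hc)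
      (measurableSet_label hf) (hfmass.trans_ne hμ.ne')
  have hdiff := (affine hg hgval hmass).trans (affine hg' hg'val hmass').symm
  constructor
  · linarith
  · rw [← abs_of_pos hμ, ← abs_mul, abs_of_pos hμ]
    congr 1
    linarith

end ParityDeviation

/-- Central identity in the proof of Lemma 3.5: for subgroups of the same mass
`μ`, `2μ·(d_D(c,g) − d_D(c,g')) = P{c=g'} − P{c=g}`, hence
`μ·|d_D(c,g)| = |μ·d_D(c,g') + (P{c=g'} − P{c=g})/2|`. -/
theorem stmt_6 {d : ℕ} (D : Measure (EuclideanSpace ℝ (Fin d))) [IsProbabilityMeasure D]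
    (c g g' : EuclideanSpace ℝ (Fin d) → ℝ)
    (hc : Measurable c) (hg : Measurable g) (hg' : Measurable g')
    (hcval : ∀ x, c x = 1 ∨ c x = -1)
    (hgval : ∀ x, g x = 1 ∨ g x = -1) (hg'val : ∀ x, g' x = 1 ∨ g' x = -1)
    (μ : ℝ) (hμ : 0 < μ)
    (hmass : (D {x | g x = 1}).toReal = μ)
    (hmass' : (D {x | g' x = 1}).toReal = μ) :
    2 * μ * (dev D c g - dev D c g') =
      (D {x | c x = g' x}).toReal - (D {x | c x = g x}).toReal ∧
    μ * |dev D c g| =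
      |μ * dev D c g' +
        ((D {x | c x = g' x}).toReal - (D {x | c x = g x}).toReal) / 2| :=
  stmt_6_general (P := D) hc hg hg' hcval hgval hg'val hμ hmass hmass'
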